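/- Let α ∈ (0,1). For every real t, the point ζ(t) = 1/c + R₁e^{it} is not one of the points 0, αc, α/c, c, 1/c, and 𝒬(ζ(t))·(iR₁e^{it})² = (cos θ₁ − cos t)·cos²(t/2)·(cos t + (α² + (2−α)√(1−α+α²))/(2(1−α)))² / [ 2·(cos t + (2−3α+2α²)/(2(1−α)√(1−α+α²)))²·(cos t + (2−α+α²)/(2√(1−α+α²)))² ], where cos θ₁ := (Re r₊ − 1/c)/R₁. In particular 𝒬(ζ(t))·(iR₁e^{it})² is a real number for every t. -/

import Mathlib

open Complex

noncomputable def cc (α : ℝ) : ℝ := Real.sqrt (α / (1 - α + α ^ 2))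
noncomputable def r1 (α : ℝ) : ℝ := -Real.sqrt α
noncomputable def r2 (α : ℝ) : ℝ := Real.sqrt α * (α * cc α + Real.sqrt α) / (cc α + Real.sqrt α)
noncomputable def r3 (α : ℝ) : ℝ := Real.sqrt α * (cc α + Real.sqrt α) / (α * cc α + Real.sqrt α)
noncomputable def rp (α : ℝ) : ℂ :=
  (cc α : ℂ) * ((1 + (α : ℂ)) / 2 + Complex.I * (Real.sqrt 3 : ℂ) * ((1 - (α : ℂ)) / 2))
noncomputable def rm (α : ℝ) : ℂ :=
  (cc α : ℂ) * ((1 + (α : ℂ)) / 2 - Complex.I * (Real.sqrt 3 : ℂ) * ((1 - (α : ℂ)) / 2))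
noncomputable def R0 (α : ℝ) : ℝ := Real.sqrt α
noncomputable def Ra (α : ℝ) : ℝ := (1 - α) * Real.sqrt α
noncomputable def R1 (α : ℝ) : ℝ := (1 - α) / Real.sqrt α

/-- The rational function `𝒬` from equation (3.4) of the paper. -/
noncomputable def Qrat (α : ℝ) (ζ : ℂ) : ℂ :=
  ((ζ - (r1 α : ℂ)) ^ 2 * (ζ - (r2 α : ℂ)) ^ 2 * (ζ - (r3 α : ℂ)) ^ 2 *
    (ζ - rp α) * (ζ - rm α)) /
  (4 * ζ ^ 2 * (ζ - (α : ℂ) * (cc α : ℂ)) ^ 2 * (ζ - (α : ℂ) / (cc α : ℂ)) ^ 2 *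
    (ζ - (cc α : ℂ)) ^ 2 * (ζ - 1 / (cc α : ℂ)) ^ 2)

/-- The parametrization `ζ(t) = 1/c + R₁ e^{it}` of the circle `γ₁`. -/
noncomputable def zeta1 (α t : ℝ) : ℂ :=
  1 / (cc α : ℂ) + (R1 α : ℂ) * Complex.exp (Complex.I * (t : ℂ))

/-!
Write `m = 1 / c`, `R = R₁` and `ζ = m + R e^{it}`. If `(p - m) * (q - m) = R ^ 2`, then
`(ζ - p) * (ζ - q) = 2 R² e^{it} (cos t - k)`, where `k = (p + q - 2 m) / (2 R)`. Away from the
double pole at the centre `m`, the zeros and poles of `𝒬` pair up in this way: the poles as `0, c`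
and `αc, α/c`, the zeros as `r₁, r₃` and `r₊, r₋`, while `r₂ = m - R` is paired with itself. The
powers of `R` and `e^{it}` produced by these pairs, by the pole at `m` and by `(i R e^{it})²`
cancel, which leaves a function of `cos t`.
-/

/-- Pairing of two zeros or poles `p`, `q` by the circle of centre `m` and radius `R`: for `R ≠ 0`
in a field, `p = m + R w` and `q = m + R w⁻¹`, where `(w + w⁻¹) / 2 = k`. For real `m`, `R`, `p`
and `q` these are inverse points of the circle. The conditions are written without division, so
that `k` is only determined when `2 * R` is not a zero divisor. -/
structure IsCirclePair {A : Type*} [CommRing A] (m R k p q : A) : Prop where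
  sub_mul_sub : (p - m) * (q - m) = R ^ 2
  sub_add_sub : (p - m) + (q - m) = 2 * R * k

namespace IsCirclePair

lemma symm {A : Type*} [CommRing A] {m R k p q : A} (h : IsCirclePair m R k p q) :
    IsCirclePair m R k q p :=
  ⟨mul_comm (q - m) _ ▸ h.sub_mul_sub, add_comm (q - m) _ ▸ h.sub_add_sub⟩

lemma ofReal {m R k p q : ℝ} (h : IsCirclePair m R k p q) :
    IsCirclePair (m : ℂ) R k p q :=
  ⟨mod_cast h.sub_mul_sub, mod_cast h.sub_add_sub⟩

lemma circle_sub_mul_circle_sub {m R k p q : ℂ} (h : IsCirclePair m R k p q) (t : ℂ) :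
    (m + R * exp (I * t) - p) * (m + R * exp (I * t) - q) =
      2 * R ^ 2 * exp (I * t) * (cos t - k) := by
  have hcos : exp (I * t) ^ 2 + 1 = 2 * exp (I * t) * cos t := by
    have hinv : exp (-t * I) * exp (I * t) = 1 := by
      rw [← exp_add, mul_comm I t, neg_mul, neg_add_cancel, exp_zero]
    rw [cos, mul_comm t I]
    linear_combination -hinv
  linear_combination R ^ 2 * hcos + h.sub_mul_sub - R * exp (I * t) * h.sub_add_sub

lemma circle_ne {m R k p q : ℝ} (h : IsCirclePair m R k p q) (hR : R ≠ 0) (hpq : p ≠ q) (t : ℝ) :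
    (m : ℂ) + R * exp (I * t) ≠ p := by
  intro hp
  have habs : |p - m| = |R| := by
    have hdiff : ((p - m : ℝ) : ℂ) = R * exp (I * t) := by
      push_cast
      linear_combination -hp
    simpa only [norm_mul, norm_real, mul_comm I, norm_exp_ofReal_mul_I, mul_one,
      Real.norm_eq_abs] using congrArg norm hdiff
  have hpm : p - m ≠ 0 := by
    rwa [← abs_ne_zero, habs, abs_ne_zero]
  have hsub : p - m = q - m :=
    mul_left_cancel₀ hpm (by rw [h.sub_mul_sub, ← sq, sq_eq_sq_iff_abs_eq_abs, habs])
  exact hpq (sub_left_injective hsub)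

end IsCirclePair

section Parameters

variable {α : ℝ}

lemma one_sub_add_sq_pos (α : ℝ) : 0 < 1 - α + α ^ 2 := by
  nlinarith [sq_nonneg (2 * α - 1)]

lemma cc_eq_sqrt_div_sqrt (hα0 : 0 ≤ α) : cc α = √α / √(1 - α + α ^ 2) :=
  Real.sqrt_div hα0 _

lemma cc_pos (hα0 : 0 < α) : 0 < cc α :=
  Real.sqrt_pos.mpr (div_pos hα0 (one_sub_add_sq_pos α))

lemma cc_sq (hα0 : 0 ≤ α) : cc α ^ 2 = α / (1 - α + α ^ 2) :=
  Real.sq_sqrt (div_nonneg hα0 (one_sub_add_sq_pos α).le)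

lemma R1_sq (hα0 : 0 ≤ α) : R1 α ^ 2 = (1 - α) ^ 2 / α := by
  rw [R1, div_pow, Real.sq_sqrt hα0]

lemma R1_ne_zero (hα0 : 0 < α) (hα1 : α ≠ 1) : R1 α ≠ 0 :=
  div_ne_zero (sub_ne_zero.mpr hα1.symm) (Real.sqrt_pos.mpr hα0).ne'

lemma one_div_cc_sq_sub_one (hα0 : 0 < α) : (1 / cc α) ^ 2 - 1 = R1 α ^ 2 := by
  rw [div_pow, cc_sq hα0.le, R1_sq hα0.le]
  field_simp
  ring

lemma mul_cc_ne_div_cc (hα0 : 0 < α) (hα1 : α ≠ 1) : α * cc α ≠ α / cc α := by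
  intro h
  have hc := cc_pos hα0
  have hR : R1 α ^ 2 = 0 := by
    rw [← one_div_cc_sq_sub_one hα0]
    field_simp at h ⊢
    linarith
  exact pow_ne_zero 2 (R1_ne_zero hα0 hα1) hR

end Parameters

section ZerosAndPoles

variable {α : ℝ}

lemma isCirclePair_zero_cc (hα0 : 0 < α) (hα1 : α ≠ 1) :
    IsCirclePair (1 / cc α) (R1 α)
      (-((2 - 3 * α + 2 * α ^ 2) / (2 * (1 - α) * √(1 - α + α ^ 2)))) 0 (cc α) where
  sub_mul_sub := by
    have hc := cc_pos hα0
    rw [← one_div_cc_sq_sub_one hα0]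
    field_simp
    ring
  sub_add_sub := by
    have hα1' := sub_ne_zero.mpr hα1.symm
    have hs := one_sub_add_sq_pos α
    rw [cc_eq_sqrt_div_sqrt hα0.le, R1]
    field_simp
    rw [Real.sq_sqrt hα0.le]
    linear_combination -2 * Real.sq_sqrt hs.le

lemma isCirclePair_mul_cc_div_cc (hα0 : 0 < α) :
    IsCirclePair (1 / cc α) (R1 α)
      (-((2 - α + α ^ 2) / (2 * √(1 - α + α ^ 2)))) (α * cc α) (α / cc α) where
  sub_mul_sub := by
    have hexpand : (α * cc α - 1 / cc α) * (α / cc α - 1 / cc α) =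
        (α - 1) * (α - 1 / cc α ^ 2) := by
      have hc := cc_pos hα0
      field_simp
    rw [hexpand, cc_sq hα0.le, R1_sq hα0.le]
    field_simp
    ring
  sub_add_sub := by
    have hs := one_sub_add_sq_pos α
    rw [cc_eq_sqrt_div_sqrt hα0.le, R1]
    field_simp
    rw [Real.sq_sqrt hα0.le, Real.sq_sqrt hs.le]
    ring

lemma r1_sub_one_div_cc (hα0 : 0 < α) :
    r1 α - 1 / cc α = -(α + √(1 - α + α ^ 2)) / √α := by
  rw [r1, cc_eq_sqrt_div_sqrt hα0.le]
  field_simp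
  rw [Real.sq_sqrt hα0.le]
  ring

lemma r2_sub_one_div_cc (hα0 : 0 < α) : r2 α - 1 / cc α = -R1 α := by
  have hs := one_sub_add_sq_pos α
  rw [r2, R1, cc_eq_sqrt_div_sqrt hα0.le]
  field_simp
  rw [Real.sq_sqrt hα0.le]
  linear_combination -Real.sq_sqrt hs.le

lemma r3_sub_one_div_cc (hα0 : 0 < α) :
    r3 α - 1 / cc α = -(1 - α) ^ 2 / (√α * (α + √(1 - α + α ^ 2))) := by
  have hs := one_sub_add_sq_pos α
  rw [r3, cc_eq_sqrt_div_sqrt hα0.le]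
  field_simp
  rw [Real.sq_sqrt hα0.le]
  linear_combination -Real.sq_sqrt hs.le

lemma isCirclePair_r1_r3 (hα0 : 0 < α) (hα1 : α ≠ 1) :
    IsCirclePair (1 / cc α) (R1 α)
      (-((α ^ 2 + (2 - α) * √(1 - α + α ^ 2)) / (2 * (1 - α)))) (r1 α) (r3 α) where
  sub_mul_sub := by
    have hs := one_sub_add_sq_pos α
    rw [r1_sub_one_div_cc hα0, r3_sub_one_div_cc hα0, R1]
    field_simp
  sub_add_sub := by
    have hα1' := sub_ne_zero.mpr hα1.symm
    have hs := one_sub_add_sq_pos α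
    rw [r1_sub_one_div_cc hα0, r3_sub_one_div_cc hα0, R1]
    field_simp
    linear_combination (1 - α) * Real.sq_sqrt hs.le

lemma isCirclePair_r2_r2 (hα0 : 0 < α) :
    IsCirclePair (1 / cc α) (R1 α) (-1) (r2 α) (r2 α) where
  sub_mul_sub := by rw [r2_sub_one_div_cc hα0]; ring
  sub_add_sub := by rw [r2_sub_one_div_cc hα0]; ring

lemma rp_re (α : ℝ) : (rp α).re = cc α * ((1 + α) / 2) := by
  simp [rp]

lemma rp_im (α : ℝ) : (rp α).im = cc α * (√3 * ((1 - α) / 2)) := by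
  simp [rp]

lemma rm_eq_conj_rp (α : ℝ) : rm α = (starRingEnd ℂ) (rp α) := by
  simp [rp, rm, map_ofNat, sub_eq_add_neg]

lemma normSq_rp_sub_one_div_cc (hα0 : 0 < α) :
    normSq (rp α - (1 / cc α : ℝ)) = R1 α ^ 2 := by
  have hc := cc_pos hα0
  have hs := one_sub_add_sq_pos α
  have hexpand : normSq (rp α - (1 / cc α : ℝ)) =
      cc α ^ 2 * (1 - α + α ^ 2) - (1 + α) + (1 / cc α) ^ 2 := by
    rw [normSq_apply, sub_re, sub_im, ofReal_re, ofReal_im, rp_re, rp_im]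
    field_simp
    linear_combination cc α ^ 4 * (1 - α) ^ 2 * Real.sq_sqrt (zero_le_three (α := ℝ))
  rw [hexpand, cc_sq hα0.le, div_mul_cancel₀ α hs.ne', ← one_div_cc_sq_sub_one hα0]
  ring

lemma isCirclePair_rp_rm (hα0 : 0 < α) (hα1 : α ≠ 1) :
    IsCirclePair ((1 / cc α : ℝ) : ℂ) (R1 α) ((((rp α).re - 1 / cc α) / R1 α : ℝ) : ℂ)
      (rp α) (rm α) where
  sub_mul_sub := by
    rw [rm_eq_conj_rp, ← conj_ofReal (1 / cc α), ← map_sub, conj_ofReal, mul_conj,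
      normSq_rp_sub_one_div_cc hα0, ofReal_pow]
  sub_add_sub := by
    have hR : (R1 α : ℂ) ≠ 0 := ofReal_ne_zero.mpr (R1_ne_zero hα0 hα1)
    have hadd : rp α + rm α = 2 * (rp α).re := by
      rw [rm_eq_conj_rp, add_conj]
      push_cast
      rfl
    push_cast
    field_simp
    linear_combination hadd

end ZerosAndPoles

section Circle

variable {α : ℝ}

lemma zeta1_eq (α t : ℝ) : zeta1 α t = ((1 / cc α : ℝ) : ℂ) + R1 α * exp (I * t) := by
  rw [zeta1, ofReal_div, ofReal_one]

lemma zeta1_notMem_poles (hα0 : 0 < α) (hα1 : α ≠ 1) (t : ℝ) :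
    zeta1 α t ∉ ({0, (α : ℂ) * cc α, (α : ℂ) / cc α, (cc α : ℂ), 1 / (cc α : ℂ)} : Set ℂ) := by
  have hR := R1_ne_zero hα0 hα1
  have hc := (cc_pos hα0).ne
  have hzero := isCirclePair_zero_cc hα0 hα1
  have hmul := isCirclePair_mul_cc_div_cc hα0
  have hne := mul_cc_ne_div_cc hα0 hα1
  simp only [Set.mem_insert_iff, Set.mem_singleton_iff, not_or]
  refine ⟨?_, ?_, ?_, ?_, ?_⟩
  · simpa only [zeta1_eq, ofReal_zero] using hzero.circle_ne hR hc t
  · simpa only [zeta1_eq, ofReal_mul] using hmul.circle_ne hR hne t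
  · simpa only [zeta1_eq, ofReal_div] using hmul.symm.circle_ne hR hne.symm t
  · simpa only [zeta1_eq] using hzero.symm.circle_ne hR hc.symm t
  · simpa only [zeta1, ne_eq, add_eq_left] using
      mul_ne_zero (ofReal_ne_zero.mpr hR) (exp_ne_zero _)

lemma IsCirclePair.zeta1_sub_mul_zeta1_sub {k p q : ℂ}
    (h : IsCirclePair ((1 / cc α : ℝ) : ℂ) (R1 α) k p q) (t : ℝ) :
    (zeta1 α t - p) * (zeta1 α t - q) = 2 * R1 α ^ 2 * exp (I * t) * (Real.cos t - k) := by
  rw [zeta1_eq, h.circle_sub_mul_circle_sub, ofReal_cos]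

lemma zeta1_sub_r2_sq (hα0 : 0 < α) (t : ℝ) :
    (zeta1 α t - r2 α) ^ 2 = 4 * R1 α ^ 2 * exp (I * t) * (Real.cos (t / 2) : ℂ) ^ 2 := by
  have hcos : Real.cos t = 2 * Real.cos (t / 2) ^ 2 - 1 := by
    rw [← Real.cos_two_mul, mul_div_cancel₀ t two_ne_zero]
  rw [sq, (isCirclePair_r2_r2 hα0).ofReal.zeta1_sub_mul_zeta1_sub, hcos]
  push_cast
  ring

lemma Qrat_eq_pairs (α : ℝ) (ζ : ℂ) :
    Qrat α ζ =
      ((ζ - r1 α) * (ζ - r3 α)) ^ 2 * (ζ - r2 α) ^ 2 * ((ζ - rp α) * (ζ - rm α)) /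
        (4 * ((ζ - (0 : ℝ)) * (ζ - cc α)) ^ 2 *
          ((ζ - (α * cc α : ℝ)) * (ζ - (α / cc α : ℝ))) ^ 2 * (ζ - 1 / cc α) ^ 2) := by
  rw [Qrat]
  push_cast
  congr 1 <;> ring

end Circle

theorem Q_on_circle_gamma1_general (α : ℝ) (hα0 : 0 < α) (hα1 : α ≠ 1) (t : ℝ) :
    zeta1 α t ∉
      ({0, (α : ℂ) * (cc α : ℂ), (α : ℂ) / (cc α : ℂ), ((cc α : ℂ)),
        1 / (cc α : ℂ)} : Set ℂ) ∧
    Qrat α (zeta1 α t) * (Complex.I * (R1 α : ℂ) * Complex.exp (Complex.I * (t : ℂ))) ^ 2 =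
      (((((rp α).re - 1 / cc α) / R1 α - Real.cos t) * Real.cos (t / 2) ^ 2 *
        (Real.cos t + (α ^ 2 + (2 - α) * Real.sqrt (1 - α + α ^ 2)) / (2 * (1 - α))) ^ 2 /
        (2 * (Real.cos t + (2 - 3 * α + 2 * α ^ 2) /
            (2 * (1 - α) * Real.sqrt (1 - α + α ^ 2))) ^ 2 *
          (Real.cos t + (2 - α + α ^ 2) / (2 * Real.sqrt (1 - α + α ^ 2))) ^ 2) : ℝ) : ℂ) ∧
    (Qrat α (zeta1 α t) *
      (Complex.I * (R1 α : ℂ) * Complex.exp (Complex.I * (t : ℂ))) ^ 2).im = 0 := by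
  have hR : (R1 α : ℂ) ≠ 0 := ofReal_ne_zero.mpr (R1_ne_zero hα0 hα1)
  have he : exp (I * t) ≠ 0 := exp_ne_zero _
  have hcenter : zeta1 α t - 1 / cc α = R1 α * exp (I * t) := add_sub_cancel_left _ _
  refine ⟨zeta1_notMem_poles hα0 hα1 t,
    (and_iff_left_of_imp fun hQ ↦ by rw [hQ, ofReal_im]).mpr ?_⟩
  rw [Qrat_eq_pairs, hcenter, zeta1_sub_r2_sq hα0,
    (isCirclePair_r1_r3 hα0 hα1).ofReal.zeta1_sub_mul_zeta1_sub,
    (isCirclePair_rp_rm hα0 hα1).zeta1_sub_mul_zeta1_sub,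
    (isCirclePair_zero_cc hα0 hα1).ofReal.zeta1_sub_mul_zeta1_sub,
    (isCirclePair_mul_cc_div_cc hα0).ofReal.zeta1_sub_mul_zeta1_sub]
  simp only [ofReal_neg, sub_neg_eq_add, mul_pow, I_sq]
  push_cast
  field_simp
  ring

/-- Formula (7.10) of the paper: on the circle `γ₁`, the quadratic differential
`𝒬(ζ)dζ²` takes real values given by an explicit trigonometric expression. -/
theorem Q_on_circle_gamma1 (α : ℝ) (hα0 : 0 < α) (hα1 : α < 1) (t : ℝ) :
    zeta1 α t ∉
      ({0, (α : ℂ) * (cc α : ℂ), (α : ℂ) / (cc α : ℂ), ((cc α : ℂ)),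
        1 / (cc α : ℂ)} : Set ℂ) ∧
    Qrat α (zeta1 α t) * (Complex.I * (R1 α : ℂ) * Complex.exp (Complex.I * (t : ℂ))) ^ 2 =
      (((((rp α).re - 1 / cc α) / R1 α - Real.cos t) * Real.cos (t / 2) ^ 2 *
        (Real.cos t + (α ^ 2 + (2 - α) * Real.sqrt (1 - α + α ^ 2)) / (2 * (1 - α))) ^ 2 /
        (2 * (Real.cos t + (2 - 3 * α + 2 * α ^ 2) /
            (2 * (1 - α) * Real.sqrt (1 - α + α ^ 2))) ^ 2 *
          (Real.cos t + (2 - α + α ^ 2) / (2 * Real.sqrt (1 - α + α ^ 2))) ^ 2) : ℝ) : ℂ) ∧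
    (Qrat α (zeta1 α t) *
      (Complex.I * (R1 α : ℂ) * Complex.exp (Complex.I * (t : ℂ))) ^ 2).im = 0 :=
  Q_on_circle_gamma1_general α hα0 hα1.ne t
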